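/- If H is a 3-uniform hypergraph, then the Staller-start game transversal number satisfies τ_g'(H) ≤ (1/16)(5 n(H) + 5 m(H) + 6). -/

import Mathlib

variable {V : Type} [Fintype V] [DecidableEq V]

/-- The set of legal moves in the transversal game with uncovered edge set `E`:
the vertices hitting at least one uncovered edge. -/
def playable (E : Finset (Finset V)) : Finset V :=
  Finset.univ.filter (fun v => ∃ e ∈ E, v ∈ e)

/-- The number of moves remaining in the transversal game with uncovered edge set `E`
under optimal play, where `ehTurn = true` iff Edge-hitter (the minimizer) moves next;
Staller (the maximizer) moves next iff `ehTurn = false`.  Each move must hit at least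
one uncovered edge, and the game ends when no uncovered edge remains. -/
def gameVal (ehTurn : Bool) (E : Finset (Finset V)) : ℕ :=
  if h : (playable E).Nonempty then
    1 +
      (if ehTurn then
        (playable E).attach.inf' (Finset.attach_nonempty_iff.mpr h)
          (fun v => gameVal (!ehTurn) (E.filter (fun e => v.1 ∉ e)))
      else
        (playable E).attach.sup' (Finset.attach_nonempty_iff.mpr h)
          (fun v => gameVal (!ehTurn) (E.filter (fun e => v.1 ∉ e))))
  else 0
termination_by E.card
decreasing_by
  all_goals
    obtain ⟨v, hv⟩ := v
    simp only [playable, Finset.mem_filter, Finset.mem_univ, true_and] at hv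
    obtain ⟨e, he, hve⟩ := hv
    exact Finset.card_lt_card (Finset.filter_ssubset.mpr ⟨e, he, by simp [hve]⟩)

/-- The game transversal number `τ_g`: Edge-hitter makes the first move. -/
def gameTransversalNum (E : Finset (Finset V)) : ℕ := gameVal true E

/-- The Staller-start game transversal number `τ_g'`: Staller makes the first move. -/
def stallerGameTransversalNum (E : Finset (Finset V)) : ℕ := gameVal false E

/-- The transversal number `τ`: the minimum size of a set of vertices meeting all edges. -/
noncomputable def transversalNum (E : Finset (Finset V)) : ℕ :=
  sInf {n | ∃ T : Finset V, (∀ e ∈ E, ∃ v ∈ T, v ∈ e) ∧ T.card = n}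

/-!
A vertex lying in `d` uncovered edges gets weight `16, 24, 30, 35, 40, …` for `d = 1, 2, 3, …`, and
moves are priced at 48 units each. Since the weight is concave in `d`, a move hitting `t` edges
lowers the weight of its neighbours by at least `2 * t` times the increment at the maximum degree.
If Edge-hitter always plays a vertex of maximum degree, this move and Staller's answer together
release the required 96 units, with two exceptions. For maximum degree three, at most 2 units are
missing; they are regained by playing a vertex of degree three with a neighbour of smaller degree
or, if there is none, from the structure of the hypergraph around Staller's answer. For maximum
degree two, at most 8 units are missing; they are regained by playing next to a vertex of degree
one, and if no vertex of degree two has such a neighbour, then the total weight is a multiple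
of 24, so a deficit of 8 is harmless. Hence the game started by Edge-hitter lasts at most one
forty-eighth of the total weight. A vertex of degree `d ≥ 1` weighs at most `15 + 5 * d`, and
Staller's first move removes a vertex and at least one edge, so the weight left after it is at most
`15 * (n - 1) + 15 * (m - 1)`.
-/

namespace TransversalGame

open Finset

section Degree

variable {α : Type*} [DecidableEq α]

/-- The degree of a vertex in the hypergraph with edge set `E`. -/
def degree (E : Finset (Finset α)) (v : α) : ℕ := #{e ∈ E | v ∈ e}

/-- The hypergraph of uncovered edges left after the vertex `v` is played. -/
def residual (E : Finset (Finset α)) (v : α) : Finset (Finset α) := {e ∈ E | v ∉ e}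

/-- The number of edges containing both `v` and `u`; on the diagonal this is the degree. -/
def codegree (E : Finset (Finset α)) (v u : α) : ℕ := degree {e ∈ E | v ∈ e} u

variable {E : Finset (Finset α)} {u v : α}

lemma degree_residual_add_codegree (E : Finset (Finset α)) (v u : α) :
    degree (residual E v) u + codegree E v u = degree E u := by
  rw [degree, residual, codegree, degree, filter_comm, filter_comm (p := fun e ↦ v ∈ e), add_comm,
    card_filter_add_card_filter_not, degree]

lemma degree_residual_le (E : Finset (Finset α)) (v u : α) :
    degree (residual E v) u ≤ degree E u :=
  (Nat.le_add_right _ _).trans_eq (degree_residual_add_codegree E v u)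

lemma degree_residual_self (E : Finset (Finset α)) (v : α) : degree (residual E v) v = 0 := by
  simp [degree, residual, filter_filter]

lemma codegree_pos {e : Finset α} (he : e ∈ E) (hv : v ∈ e) (hu : u ∈ e) :
    0 < codegree E v u :=
  card_pos.mpr ⟨e, by simp [he, hv, hu]⟩

lemma degree_pos_iff : 0 < degree E v ↔ ∃ e ∈ E, v ∈ e := by
  simp [degree, card_pos, Finset.Nonempty]

lemma residual_subset (E : Finset (Finset α)) (v : α) : residual E v ⊆ E := filter_subset _ _

lemma residual_ssubset (hv : 0 < degree E v) : residual E v ⊂ E := by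
  obtain ⟨e, he, hve⟩ := degree_pos_iff.mp hv
  exact filter_ssubset.mpr ⟨e, he, not_not_intro hve⟩

lemma sized_residual {k : ℕ} (hE : (E : Set (Finset α)).Sized k) (v : α) :
    (residual E v : Set (Finset α)).Sized k :=
  hE.mono (coe_subset.mpr (residual_subset E v))

lemma sum_degree (s : Finset α) (E : Finset (Finset α)) :
    ∑ v ∈ s, degree E v = ∑ e ∈ E, #(s ∩ e) := by
  simp only [degree, card_filter, ← filter_mem_eq_inter]
  exact sum_comm

lemma dvd_sum_degree {k : ℕ} (hE : (E : Set (Finset α)).Sized k) {s : Finset α}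
    (hs : ∀ e ∈ E, e ⊆ s ∨ Disjoint s e) : k ∣ ∑ v ∈ s, degree E v := by
  rw [sum_degree]
  refine dvd_sum fun e he ↦ ?_
  rcases hs e he with hsub | hdisj
  · rw [inter_eq_right.mpr hsub, hE he]
  · simp [disjoint_iff_inter_eq_empty.mp hdisj]

variable [Fintype α]

lemma sum_univ_degree {k : ℕ} (hE : (E : Set (Finset α)).Sized k) :
    ∑ v, degree E v = k * #E := by
  simp only [sum_degree, univ_inter]
  rw [sum_const_nat fun e he ↦ hE he, mul_comm]

lemma sum_erase_codegree {k : ℕ} (hE : (E : Set (Finset α)).Sized (k + 1)) (v : α) :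
    ∑ u ∈ univ.erase v, codegree E v u = k * degree E v := by
  have hcard : ∀ e ∈ E.filter (v ∈ ·), #(univ.erase v ∩ e) = k := fun e he ↦ by
    obtain ⟨heE, hve⟩ := mem_filter.mp he
    rw [erase_inter, univ_inter, card_erase_of_mem hve, hE heE, Nat.add_sub_cancel]
  simp only [codegree, sum_degree]
  rw [sum_const_nat hcard, mul_comm, degree]

end Degree

section Weight

/-- The increase of the weight of a vertex when its degree grows from `d` to `d + 1`. -/
def increment : ℕ → ℕ
  | 0 => 16
  | 1 => 8
  | 2 => 6
  | _ => 5

/-- The weight of a vertex of degree `d` in the potential function of the game, scaled so that one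
move is worth 48. -/
def weight (d : ℕ) : ℕ := ∑ i ∈ range d, increment i

lemma increment_antitone : Antitone increment :=
  antitone_nat_of_succ_le fun
    | 0 | 1 | 2 => by decide
    | _ + 3 => le_rfl

lemma weight_mono : Monotone weight := fun _ _ h ↦
  sum_le_sum_of_subset (range_subset_range.mpr h)

lemma weight_add_three (d : ℕ) : weight (d + 3) = 30 + 5 * d := by
  induction d with
  | zero => rfl
  | succ d ih =>
    have hsucc : weight (d + 1 + 3) = weight (d + 3) + 5 := sum_range_succ increment (d + 3)
    omega

lemma weight_le : ∀ d, weight d ≤ 15 + 5 * d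
  | 0 | 1 | 2 => by decide
  | d + 3 => by rw [weight_add_three]; omega

lemma sixteen_le_weight {d : ℕ} (hd : 0 < d) : 16 ≤ weight d := weight_mono hd

lemma weight_add_increment_mul_le {a k D : ℕ} (h : a + k ≤ D + 1) :
    weight a + increment D * k ≤ weight (a + k) := by
  have hsum : k • increment D ≤ ∑ i ∈ range k, increment (a + i) := by
    simpa using card_nsmul_le_sum (range k) (fun i ↦ increment (a + i)) (increment D)
      fun i hi ↦ increment_antitone (by have := mem_range.mp hi; omega)
  rw [smul_eq_mul, mul_comm] at hsum
  simpa [weight, sum_range_add] using hsum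

variable {α : Type*} [DecidableEq α]

lemma weight_degree_residual_add_le {E : Finset (Finset α)} {D : ℕ} {u : α}
    (hu : degree E u ≤ D + 1) (v : α) :
    weight (degree (residual E v) u) + increment D * codegree E v u ≤ weight (degree E u) := by
  rw [← degree_residual_add_codegree E v u] at hu ⊢
  exact weight_add_increment_mul_le hu

variable [Fintype α]

/-- The potential function of the game: the sum of the weights of all vertices. -/
def totalWeight (E : Finset (Finset α)) : ℕ := ∑ v, weight (degree E v)

variable {E : Finset (Finset α)} {D : ℕ} {v w : α}

lemma le_totalWeight_of_mem {k : ℕ} (hE : (E : Set (Finset α)).Sized k) {e : Finset α}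
    (he : e ∈ E) : 16 * k ≤ totalWeight E :=
  calc
    16 * k = #e • 16 := by rw [hE he, smul_eq_mul, mul_comm]
    _ ≤ ∑ v ∈ e, weight (degree E v) :=
      card_nsmul_le_sum _ _ _ fun _ hv ↦ sixteen_le_weight (degree_pos_iff.mpr ⟨e, he, hv⟩)
    _ ≤ totalWeight E := sum_le_sum_of_subset (subset_univ e)

lemma totalWeight_residual_add_sum_le (hE : (E : Set (Finset α)).Sized 3) {c : ℕ} {b : α → ℕ}
    (h : ∀ u ≠ v,
      weight (degree (residual E v) u) + c * codegree E v u + b u ≤ weight (degree E u)) :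
    totalWeight (residual E v) + weight (degree E v) + 2 * c * degree E v +
      ∑ u ∈ univ.erase v, b u ≤ totalWeight E := by
  have hsum := sum_le_sum fun u (hu : u ∈ univ.erase v) ↦ h u (ne_of_mem_erase hu)
  rw [sum_add_distrib, sum_add_distrib, ← mul_sum, sum_erase_codegree hE v] at hsum
  have hv : weight (degree (residual E v) v) = 0 := by rw [degree_residual_self]; rfl
  rw [totalWeight, totalWeight, ← add_sum_erase univ _ (mem_univ v),
    ← add_sum_erase univ (fun u ↦ weight (degree E u)) (mem_univ v), hv]
  linarith

lemma totalWeight_residual_add_le (hE : (E : Set (Finset α)).Sized 3)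
    (hD : ∀ u, degree E u ≤ D + 1) (v : α) :
    totalWeight (residual E v) + weight (degree E v) + 2 * increment D * degree E v ≤
      totalWeight E := by
  simpa using totalWeight_residual_add_sum_le hE (b := 0)
    fun u _ ↦ weight_degree_residual_add_le (hD u) v

lemma totalWeight_residual_add_surplus_le (hE : (E : Set (Finset α)).Sized 3)
    (hD : ∀ u, degree E u ≤ D + 1) (hwv : w ≠ v) {b : ℕ}
    (hb : weight (degree (residual E v) w) + increment D * codegree E v w + b ≤
      weight (degree E w)) :
    totalWeight (residual E v) + weight (degree E v) + 2 * increment D * degree E v + b ≤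
      totalWeight E := by
  have hsum : ∑ u ∈ univ.erase v, (Pi.single w b : α → ℕ) u = b := by simp [hwv]
  have hle := totalWeight_residual_add_sum_le hE (v := v) (c := increment D) (b := Pi.single w b)
    fun u _ ↦ by
      rcases eq_or_ne u w with rfl | huw
      · simpa using hb
      · simpa [huw] using weight_degree_residual_add_le (hD u) v
  rwa [hsum] at hle

lemma totalWeight_residual_add_of_neighbor_le (hE : (E : Set (Finset α)).Sized 3)
    (hD : ∀ u, degree E u ≤ D + 1) (hwv : w ≠ v) (hvw : 0 < codegree E v w) {b d : ℕ}
    (hw : degree E w ≤ d + 1) (hb : increment D + b ≤ increment d) :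
    totalWeight (residual E v) + weight (degree E v) + 2 * increment D * degree E v + b ≤
      totalWeight E := by
  refine totalWeight_residual_add_surplus_le hE hD hwv ?_
  calc
    weight (degree (residual E v) w) + increment D * codegree E v w + b
      ≤ weight (degree (residual E v) w) + (increment D + b) * codegree E v w := by nlinarith
    _ ≤ weight (degree (residual E v) w) + increment d * codegree E v w := by gcongr
    _ ≤ weight (degree E w) := weight_degree_residual_add_le hw v

lemma totalWeight_residual_add_sixteen_le (hE : (E : Set (Finset α)).Sized 3)
    (hD : ∀ u, degree E u ≤ D + 1) (hv : 0 < degree E v) :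
    totalWeight (residual E v) + 16 + 2 * increment D ≤ totalWeight E :=
  calc
    totalWeight (residual E v) + 16 + 2 * increment D
      ≤ totalWeight (residual E v) + weight (degree E v) + 2 * increment D * degree E v := by
        gcongr ?_ + ?_ + ?_
        · rfl
        · exact sixteen_le_weight hv
        · exact Nat.le_mul_of_pos_right _ hv
    _ ≤ totalWeight E := totalWeight_residual_add_le hE hD v

lemma totalWeight_le (hE : (E : Set (Finset α)).Sized 3) :
    totalWeight E ≤ 15 * #{v | 0 < degree E v} + 15 * #E := by
  have hpoint : ∀ v, weight (degree E v) ≤ 15 * (if 0 < degree E v then 1 else 0) +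
      5 * degree E v := fun v ↦ by
    split_ifs with hv
    · exact weight_le _
    · simp [Nat.eq_zero_of_not_pos hv, weight]
  calc
    totalWeight E ≤ ∑ v, (15 * (if 0 < degree E v then 1 else 0) + 5 * degree E v) :=
      sum_le_sum fun v _ ↦ hpoint v
    _ = 15 * #{v | 0 < degree E v} + 15 * #E := by
      rw [sum_add_distrib, ← mul_sum, ← mul_sum, sum_univ_degree hE, card_filter]
      ring

lemma totalWeight_residual_add_thirty_le (hE : (E : Set (Finset α)).Sized 3)
    (hv : 0 < degree E v) :
    totalWeight (residual E v) + 30 ≤ 15 * Fintype.card α + 15 * #E := by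
  have hle := totalWeight_le (sized_residual hE v)
  have hn : #{u | 0 < degree (residual E v) u} < Fintype.card α :=
    card_lt_univ_of_notMem (x := v) (by simp [degree_residual_self])
  have hm : #(residual E v) < #E := card_lt_card (residual_ssubset hv)
  omega

end Weight

section DegreeClosed

variable {α : Type*} [DecidableEq α] {E : Finset (Finset α)}

/-- Every vertex sharing an edge with a vertex of degree `d` has degree `d` itself, so that the
vertices of degree `d` span a union of connected components. -/
def IsDegreeClosed (E : Finset (Finset α)) (d : ℕ) : Prop :=
  ∀ ⦃v w⦄, degree E v = d → 0 < codegree E v w → degree E w = d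

lemma IsDegreeClosed.codegree_eq_or_exists_neighbor {d k : ℕ} (hcl : IsDegreeClosed E (d + 1))
    (hE : (E : Set (Finset α)).Sized k) (hk : 1 < k) (hD : ∀ u, degree E u ≤ d + 1) {u v : α}
    (hu : degree (residual E v) u = 1) :
    degree E u = d + 1 ∧ codegree E v u = d ∨
      ∃ y ≠ u, 0 < codegree (residual E v) u y ∧ degree (residual E v) y ≤ d := by
  obtain ⟨e, he, hue⟩ := degree_pos_iff.mp (hu ▸ one_pos)
  obtain ⟨y, hye, hyu⟩ := exists_mem_ne (by rwa [sized_residual hE v he]) u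
  rcases le_or_gt (degree (residual E v) y) d with hy | hy
  · exact .inr ⟨y, hyu, codegree_pos he hue hye, hy⟩
  · have hy_max : degree E y = d + 1 := le_antisymm (hD y) (hy.trans_le (degree_residual_le E v y))
    have hu_max : degree E u = d + 1 :=
      hcl hy_max (codegree_pos (residual_subset E v he) hye hue)
    have hsplit := degree_residual_add_codegree E v u
    exact .inl ⟨hu_max, by omega⟩

variable [Fintype α]

lemma IsDegreeClosed.dvd_mul_card {d k : ℕ} (hcl : IsDegreeClosed E d)
    (hE : (E : Set (Finset α)).Sized k) : k ∣ d * #{u | degree E u = d} := by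
  have hdvd : k ∣ ∑ u with degree E u = d, degree E u := by
    refine dvd_sum_degree hE fun e he ↦ ?_
    by_cases hx : ∃ x ∈ e, degree E x = d
    · obtain ⟨x, hxe, hx⟩ := hx
      exact .inl fun y hye ↦ mem_filter_univ y |>.mpr (hcl hx (codegree_pos he hxe hye))
    · push Not at hx
      exact .inr (disjoint_right.mpr fun y hye ↦ by simpa using hx y hye)
  rwa [sum_const_nat fun u hu ↦ (mem_filter.mp hu).2, mul_comm] at hdvd

lemma IsDegreeClosed.twentyFour_dvd_totalWeight (hcl : IsDegreeClosed E 2)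
    (hE : (E : Set (Finset α)).Sized 3) (hD : ∀ u, degree E u ≤ 2) : 24 ∣ totalWeight E := by
  have hthree : 3 ∣ 2 * #{u | degree E u = 2} := hcl.dvd_mul_card hE
  have hpoint : ∀ u, weight (degree E u) + 8 * (if degree E u = 2 then 1 else 0) =
      16 * degree E u := fun u ↦ by
    have hu := hD u
    interval_cases degree E u <;> rfl
  have hsum : totalWeight E + 8 * #{u | degree E u = 2} = 16 * (3 * #E) := by
    rw [card_filter, mul_sum, totalWeight, ← sum_add_distrib, ← sum_univ_degree hE, mul_sum]
    exact sum_congr rfl fun u _ ↦ hpoint u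
  omega

end DegreeClosed

section EfficientMove

variable {α : Type*} [DecidableEq α] [Fintype α] {E : Finset (Finset α)} {D : ℕ} {u v w : α}

/-- Playing `v` is legal for Edge-hitter and, whatever Staller answers, the two moves lower the
total weight by at least their price `96` up to a deficit of `s`. -/
def IsEfficientMove (E : Finset (Finset α)) (v : α) (s : ℕ) : Prop :=
  0 < degree E v ∧ ∀ u, 0 < degree (residual E v) u →
    totalWeight (residual (residual E v) u) + 96 ≤ totalWeight E + s

lemma isEfficientMove_of_le (hE : (E : Set (Finset α)).Sized 3) (hD : ∀ u, degree E u ≤ D + 1)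
    (hv : 0 < degree E v) {a s : ℕ} (hfirst : totalWeight (residual E v) + a ≤ totalWeight E)
    (ha : 80 ≤ a + 2 * increment D + s) : IsEfficientMove E v s := by
  refine ⟨hv, fun u hu ↦ ?_⟩
  have hsecond := totalWeight_residual_add_sixteen_le (sized_residual hE v)
    (fun w ↦ (degree_residual_le E v w).trans (hD w)) hu
  omega

lemma isEfficientMove_of_degree_eq (hE : (E : Set (Finset α)).Sized 3)
    (hD : ∀ u, degree E u ≤ D + 1) (hv : degree E v = D + 1) {s : ℕ}
    (hs : 80 ≤ weight (D + 1) + 2 * increment D * (D + 2) + s) : IsEfficientMove E v s := by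
  refine isEfficientMove_of_le hE hD (by omega) (a := weight (D + 1) + 2 * increment D * (D + 1))
    ?_ (by linarith)
  simpa only [hv, add_assoc] using totalWeight_residual_add_le hE hD v

lemma isEfficientMove_of_neighbor (hE : (E : Set (Finset α)).Sized 3)
    (hD : ∀ u, degree E u ≤ D + 2) (hv : degree E v = D + 2) (hw : degree E w ≤ D + 1)
    (hvw : 0 < codegree E v w)
    (h : 80 ≤ weight (D + 2) + 2 * increment (D + 1) * (D + 3) +
      (increment D - increment (D + 1))) :
    IsEfficientMove E v 0 := by
  have hwv : w ≠ v := by rintro rfl; omega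
  have hfirst := totalWeight_residual_add_of_neighbor_le (D := D + 1) hE hD hwv hvw hw
    (Nat.add_sub_of_le (increment_antitone D.le_succ)).le
  rw [hv, add_assoc, add_assoc] at hfirst
  exact isEfficientMove_of_le (D := D + 1) hE hD (by omega) hfirst (by linarith)

lemma IsDegreeClosed.isEfficientMove (hcl : IsDegreeClosed E 3)
    (hE : (E : Set (Finset α)).Sized 3) (hD : ∀ u, degree E u ≤ 3) (hv : degree E v = 3) :
    IsEfficientMove E v 0 := by
  refine ⟨by omega, fun u hu ↦ ?_⟩
  have hE' := sized_residual hE v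
  have hD' : ∀ w, degree (residual E v) w ≤ 3 := fun w ↦ (degree_residual_le E v w).trans (hD w)
  have hweight : weight 3 = 30 ∧ increment 2 = 6 := ⟨rfl, rfl⟩
  have hweight_u : 16 ≤ weight (degree (residual E v) u) := sixteen_le_weight hu
  have hfirst := totalWeight_residual_add_le (D := 2) hE hD v
  have hsecond := totalWeight_residual_add_le (D := 2) hE' hD' u
  rw [hv, hweight.1, hweight.2] at hfirst
  rw [hweight.2] at hsecond
  -- The two moves release `66 + weight d + 12 * d` units, where `d` is the degree of `u` in the
  -- residual hypergraph; this falls short of 96, by 2, only for `d = 1`.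
  rcases (Nat.succ_le_iff.mpr hu).eq_or_lt with hu1 | hu2
  · rcases hcl.codegree_eq_or_exists_neighbor hE (by norm_num) hD hu1.symm with
      ⟨hu3, hvu⟩ | ⟨y, hyu, huy, hy⟩
    · have huv : u ≠ v := by rintro rfl; rw [degree_residual_self] at hu; omega
      have hsurplus := totalWeight_residual_add_surplus_le (D := 2) (b := 2) hE hD huv
        (by rw [← hu1, hvu, hu3]; decide)
      rw [hv, hweight.1, hweight.2] at hsurplus
      omega
    · have hsurplus := totalWeight_residual_add_of_neighbor_le (D := 2) (b := 2) (d := 1)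
        hE' hD' hyu huy hy le_rfl
      rw [hweight.2] at hsurplus
      omega
  · omega

lemma exists_isEfficientMove_of_three (hE : (E : Set (Finset α)).Sized 3)
    (hD : ∀ u, degree E u ≤ 3) (hv : degree E v = 3) : ∃ x, IsEfficientMove E x 0 := by
  by_cases hcl : IsDegreeClosed E 3
  · exact ⟨v, hcl.isEfficientMove hE hD hv⟩
  · simp only [IsDegreeClosed, not_forall] at hcl
    obtain ⟨x, y, hx, hxy, hy⟩ := hcl
    exact ⟨x, isEfficientMove_of_neighbor (D := 1) hE hD hx
      (Nat.le_of_lt_succ ((hD y).lt_of_ne hy)) hxy (by decide)⟩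

lemma exists_isEfficientMove_of_two (hE : (E : Set (Finset α)).Sized 3)
    (hD : ∀ u, degree E u ≤ 2) (hv : degree E v = 2) :
    (∃ x, IsEfficientMove E x 0) ∨ ∃ x, IsEfficientMove E x 8 ∧ 24 ∣ totalWeight E := by
  by_cases hcl : IsDegreeClosed E 2
  · exact .inr ⟨v, isEfficientMove_of_degree_eq (D := 1) hE hD hv (by decide),
      hcl.twentyFour_dvd_totalWeight hE hD⟩
  · simp only [IsDegreeClosed, not_forall] at hcl
    obtain ⟨x, y, hx, hxy, hy⟩ := hcl
    exact .inl ⟨x, isEfficientMove_of_neighbor (D := 0) hE hD hx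
      (Nat.le_of_lt_succ ((hD y).lt_of_ne hy)) hxy (by decide)⟩

lemma exists_isEfficientMove (hE : (E : Set (Finset α)).Sized 3) (hne : ∃ v, 0 < degree E v) :
    (∃ x, IsEfficientMove E x 0) ∨ ∃ x, IsEfficientMove E x 8 ∧ 24 ∣ totalWeight E := by
  obtain ⟨w, hw⟩ := hne
  obtain ⟨v, -, hmax⟩ := exists_max_image univ (degree E) ⟨w, mem_univ w⟩
  replace hmax : ∀ u, degree E u ≤ degree E v := fun u ↦ hmax u (mem_univ u)
  generalize hv : degree E v = D at hmax
  match D, hv, hmax with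
  | 0, _, hmax => exact absurd (hw.trans_le (hmax w)) (lt_irrefl 0)
  | 1, hv, hmax => exact .inl ⟨v, isEfficientMove_of_degree_eq (D := 0) hE hmax hv (by decide)⟩
  | 2, hv, hmax => exact exists_isEfficientMove_of_two hE hmax hv
  | 3, hv, hmax => exact .inl (exists_isEfficientMove_of_three hE hmax hv)
  | d + 4, hv, hmax =>
    refine .inl ⟨v, isEfficientMove_of_degree_eq (D := d + 3) hE hmax hv ?_⟩
    have hweight : weight (d + 3 + 1) = 30 + 5 * (d + 1) := weight_add_three (d + 1)
    have hincrement : increment (d + 3) = 5 := rfl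
    rw [hweight, hincrement]
    omega

end EfficientMove

section Game

lemma mem_playable_iff {E : Finset (Finset V)} {v : V} : v ∈ playable E ↔ 0 < degree E v := by
  rw [playable, mem_filter_univ, degree_pos_iff]

lemma gameVal_true_le_one_add {E : Finset (Finset V)} {v : V} (hv : 0 < degree E v) :
    gameVal true E ≤ 1 + gameVal false (residual E v) := by
  have hv' : v ∈ playable E := mem_playable_iff.mpr hv
  rw [gameVal, dif_pos ⟨v, hv'⟩, if_pos rfl]
  gcongr
  exact inf'_le (fun x : playable E ↦ gameVal false (residual E x)) (mem_attach _ ⟨v, hv'⟩)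

lemma gameVal_eq_zero {E : Finset (Finset V)} (turn : Bool) (hE : ∀ v, ¬ 0 < degree E v) :
    gameVal turn E = 0 := by
  rw [gameVal, dif_neg]
  exact fun ⟨v, hv⟩ ↦ hE v (mem_playable_iff.mp hv)

lemma gameVal_false_le {E : Finset (Finset V)} {B : ℕ}
    (h : ∀ v, 0 < degree E v → 1 + gameVal true (residual E v) ≤ B) : gameVal false E ≤ B := by
  by_cases hne : (playable E).Nonempty
  · rw [gameVal, dif_pos hne, if_neg Bool.false_ne_true]
    obtain ⟨v, -, hv⟩ := exists_mem_eq_sup' (attach_nonempty_iff.mpr hne)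
      fun x ↦ gameVal true (residual E x)
    exact (congrArg (1 + ·) hv).trans_le (h v (mem_playable_iff.mp v.2))
  · rw [gameVal, dif_neg hne]
    exact B.zero_le

lemma IsEfficientMove.gameVal_true_le {E : Finset (Finset V)} {v : V} {s : ℕ}
    (hv : IsEfficientMove E v s) (hE : (E : Set (Finset V)).Sized 3)
    (ih : ∀ E' ⊂ E, (E' : Set (Finset V)).Sized 3 → 48 * gameVal true E' ≤ totalWeight E') :
    48 * gameVal true E ≤ totalWeight E + s := by
  obtain ⟨hpos, hreply⟩ := hv
  obtain ⟨e, he, -⟩ := degree_pos_iff.mp hpos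
  have hW : 16 * 3 ≤ totalWeight E := le_totalWeight_of_mem hE he
  have hfalse : gameVal false (residual E v) ≤ (totalWeight E + s - 48) / 48 := by
    refine gameVal_false_le fun u hu ↦ ?_
    have hrest := ih _ ((residual_ssubset hu).trans (residual_ssubset hpos))
      (sized_residual (sized_residual hE v) u)
    have hround := hreply u hu
    omega
  have htrue := gameVal_true_le_one_add hpos
  omega

theorem mul_gameVal_true_le_totalWeight {E : Finset (Finset V)}
    (hE : (E : Set (Finset V)).Sized 3) : 48 * gameVal true E ≤ totalWeight E := by
  induction E using Finset.strongInduction with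
  | H E ih =>
    by_cases hne : ∃ v, 0 < degree E v
    · rcases exists_isEfficientMove hE hne with ⟨v, hv⟩ | ⟨v, hv, hdvd⟩
      · exact hv.gameVal_true_le hE ih
      · have hle := hv.gameVal_true_le hE ih
        omega
    · rw [gameVal_eq_zero true (not_exists.mp hne), mul_zero]
      exact Nat.zero_le _

end Game

end TransversalGame

/-- If `H` is a `3`-uniform hypergraph, then `τ_g'(H) ≤ (1/16)(5 n(H) + 5 m(H) + 6)`. -/
theorem stallerGameTransversalNum_le_of_three_uniform
    {V : Type} [Fintype V] [DecidableEq V] (E : Finset (Finset V))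
    (h3 : ∀ e ∈ E, e.card = 3) :
    (stallerGameTransversalNum E : ℚ) ≤
      (1 / 16) * (5 * Fintype.card V + 5 * E.card + 6) := by
  have hE : (E : Set (Finset V)).Sized 3 := fun e he ↦ h3 e he
  have hdiv : stallerGameTransversalNum E ≤ (15 * Fintype.card V + 15 * E.card + 18) / 48 := by
    refine TransversalGame.gameVal_false_le fun v hv ↦ ?_
    have hgame :=
      TransversalGame.mul_gameVal_true_le_totalWeight (TransversalGame.sized_residual hE v)
    have hweight := TransversalGame.totalWeight_residual_add_thirty_le hE hv
    omega
  have hmul : 48 * stallerGameTransversalNum E ≤ 15 * Fintype.card V + 15 * E.card + 18 := by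
    omega
  have hcast : (48 * stallerGameTransversalNum E : ℚ) ≤
      15 * Fintype.card V + 15 * E.card + 18 := by exact_mod_cast hmul
  linarith
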